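/- Let (Ω, ℱ, P) be a probability space, let C be a convex set of random variables that are strictly positive almost surely, and let V* ∈ C. Then the following are equivalent: (i) E[W / V*] ≤ 1 for every W ∈ C (V* is a numéraire portfolio for C); (ii) for every W ∈ C, E[(log(W/V*))⁺] ≤ E[(log(W/V*))⁻], i.e. E[log(W/V*)] ≤ 0 in the extended sense (V* is growth-optimal for C). -/

import Mathlib

open MeasureTheory Set Filter

/-!
If `E[X] ≤ 1`, then `log X ≤ X - 1` gives `E[log X] ≤ 0`. Conversely, on the segment from `V*` to
`W` the ratio to `V*` is `(t + X) / (t + 1)` with `X = W / V*`, and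
`t log (1 + X / t) - 1 ≤ t log ((t + X) / (t + 1))`. Growth-optimality along the segment therefore
bounds `E[t log (1 + X / t)]` by `1`, and Fatou's lemma as `t → ∞` gives `E[X] ≤ 1`. Subtracting
only `1` from nonnegative functions keeps the extended expectations free of `∞ - ∞`.
-/

open scoped ENNReal Topology

section

variable {Ω : Type*} [MeasurableSpace Ω] {μ : Measure Ω}

lemma lintegral_tsub_le_lintegral_tsub_iff {f g : Ω → ℝ≥0∞} (hf : AEMeasurable f μ)
    (hg : AEMeasurable g μ) (hg_fin : ∫⁻ ω, g ω ∂μ ≠ ∞) :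
    ∫⁻ ω, (f ω - g ω) ∂μ ≤ ∫⁻ ω, (g ω - f ω) ∂μ ↔ ∫⁻ ω, f ω ∂μ ≤ ∫⁻ ω, g ω ∂μ := by
  have hsum : ∫⁻ ω, f ω ∂μ + ∫⁻ ω, (g ω - f ω) ∂μ = ∫⁻ ω, g ω ∂μ + ∫⁻ ω, (f ω - g ω) ∂μ := by
    simp only [← lintegral_add_left' hf, ← lintegral_add_left' hg, add_tsub_eq_max, max_comm]
  have hsub_fin : ∫⁻ ω, (g ω - f ω) ∂μ ≠ ∞ :=
    ne_top_of_le_ne_top hg_fin (lintegral_mono fun _ ↦ tsub_le_self)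
  rw [← ENNReal.add_le_add_iff_left hg_fin, ← hsum, ENNReal.add_le_add_iff_right hsub_fin]

lemma lintegral_le_of_tendsto_of_eventually_le {ι : Type*} {u : Filter ι} [u.IsCountablyGenerated]
    [u.NeBot] {f : ι → Ω → ℝ≥0∞} {g : Ω → ℝ≥0∞} {c : ℝ≥0∞} (hf : ∀ i, AEMeasurable (f i) μ)
    (hfg : ∀ᵐ ω ∂μ, Tendsto (f · ω) u (𝓝 (g ω))) (hc : ∀ᶠ i in u, ∫⁻ ω, f i ω ∂μ ≤ c) :
    ∫⁻ ω, g ω ∂μ ≤ c :=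
  calc ∫⁻ ω, g ω ∂μ = ∫⁻ ω, liminf (f · ω) u ∂μ :=
        lintegral_congr_ae (hfg.mono fun _ h ↦ h.liminf_eq.symm)
    _ ≤ liminf (fun i ↦ ∫⁻ ω, f i ω ∂μ) u := lintegral_liminf_le' hf
    _ ≤ c := liminf_le_of_frequently_le' hc.frequently

/-- `E[f] ≤ 0` in the extended sense `E[f⁺] ≤ E[f⁻]`, which also makes sense when `f` is not
integrable. `ENNReal.ofReal` already truncates at zero, so it takes the positive part; the case
`E[f⁺] = E[f⁻] = ∞` is included. -/
def HasNonposMean (f : Ω → ℝ) (μ : Measure Ω) : Prop :=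
  ∫⁻ ω, ENNReal.ofReal (f ω) ∂μ ≤ ∫⁻ ω, ENNReal.ofReal (-f ω) ∂μ

namespace HasNonposMean

variable {f g : Ω → ℝ}

lemma mono_ae (hg : HasNonposMean g μ) (hfg : f ≤ᵐ[μ] g) : HasNonposMean f μ :=
  calc ∫⁻ ω, ENNReal.ofReal (f ω) ∂μ ≤ ∫⁻ ω, ENNReal.ofReal (g ω) ∂μ :=
        lintegral_mono_ae (hfg.mono fun _ h ↦ ENNReal.ofReal_le_ofReal h)
    _ ≤ ∫⁻ ω, ENNReal.ofReal (-g ω) ∂μ := hg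
    _ ≤ ∫⁻ ω, ENNReal.ofReal (-f ω) ∂μ :=
        lintegral_mono_ae (hfg.mono fun _ h ↦ ENNReal.ofReal_le_ofReal (neg_le_neg h))

lemma const_mul (hf : HasNonposMean f μ) {c : ℝ} (hc : 0 ≤ c) :
    HasNonposMean (fun ω ↦ c * f ω) μ := by
  simp only [HasNonposMean, ← mul_neg, ENNReal.ofReal_mul hc,
    lintegral_const_mul' _ _ ENNReal.ofReal_ne_top]
  exact mul_le_mul_right hf _

end HasNonposMean

lemma hasNonposMean_sub_iff {f g : Ω → ℝ} (hf : AEMeasurable f μ) (hg : AEMeasurable g μ)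
    (hf_nonneg : 0 ≤ᵐ[μ] f) (hg_nonneg : 0 ≤ᵐ[μ] g)
    (hg_fin : ∫⁻ ω, ENNReal.ofReal (g ω) ∂μ ≠ ∞) :
    HasNonposMean (fun ω ↦ f ω - g ω) μ ↔
      ∫⁻ ω, ENNReal.ofReal (f ω) ∂μ ≤ ∫⁻ ω, ENNReal.ofReal (g ω) ∂μ := by
  have hpos : ∫⁻ ω, ENNReal.ofReal (f ω - g ω) ∂μ =
      ∫⁻ ω, (ENNReal.ofReal (f ω) - ENNReal.ofReal (g ω)) ∂μ :=
    lintegral_congr_ae (hg_nonneg.mono fun ω ↦ ENNReal.ofReal_sub (f ω))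
  have hneg : ∫⁻ ω, ENNReal.ofReal (-(f ω - g ω)) ∂μ =
      ∫⁻ ω, (ENNReal.ofReal (g ω) - ENNReal.ofReal (f ω)) ∂μ := by
    simp only [neg_sub]
    exact lintegral_congr_ae (hf_nonneg.mono fun ω ↦ ENNReal.ofReal_sub (g ω))
  rw [HasNonposMean, hpos, hneg,
    lintegral_tsub_le_lintegral_tsub_iff hf.ennreal_ofReal hg.ennreal_ofReal hg_fin]

lemma hasNonposMean_sub_one_iff [IsFiniteMeasure μ] {f : Ω → ℝ} (hf : AEMeasurable f μ)
    (hf_nonneg : 0 ≤ᵐ[μ] f) :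
    HasNonposMean (fun ω ↦ f ω - 1) μ ↔ ∫⁻ ω, ENNReal.ofReal (f ω) ∂μ ≤ μ univ := by
  rw [hasNonposMean_sub_iff hf aemeasurable_const hf_nonneg (ae_of_all μ fun _ ↦ zero_le_one)
    (by simp), ENNReal.ofReal_one, lintegral_one]

lemma hasNonposMean_log_of_lintegral_le [IsFiniteMeasure μ] {X : Ω → ℝ} (hX : AEMeasurable X μ)
    (hX_pos : ∀ᵐ ω ∂μ, 0 < X ω) (h : ∫⁻ ω, ENNReal.ofReal (X ω) ∂μ ≤ μ univ) :
    HasNonposMean (fun ω ↦ Real.log (X ω)) μ :=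
  ((hasNonposMean_sub_one_iff hX (hX_pos.mono fun _ ↦ le_of_lt)).2 h).mono_ae
    (hX_pos.mono fun _ ↦ Real.log_le_sub_one_of_pos)

lemma mul_log_one_add_div_sub_one_le {t x : ℝ} (ht : 0 < t) (hx : 0 ≤ x) :
    t * Real.log (1 + x / t) - 1 ≤ t * Real.log ((t + x) / (t + 1)) := by
  have hlog : Real.log ((t + x) / (t + 1)) = Real.log (1 + x / t) - Real.log (1 + 1 / t) := by
    rw [← Real.log_div (by positivity) (by positivity)]
    congr 1
    field_simp
  have hlog_le : t * Real.log (1 + 1 / t) ≤ 1 :=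
    calc t * Real.log (1 + 1 / t) ≤ t * (1 + 1 / t - 1) := by
          gcongr
          exact Real.log_le_sub_one_of_pos (by positivity)
      _ = 1 := by field_simp; ring
  rw [hlog, mul_sub]
  linarith

lemma lintegral_le_of_forall_hasNonposMean_log [IsFiniteMeasure μ] {X : Ω → ℝ}
    (hX : AEMeasurable X μ) (hX_nonneg : 0 ≤ᵐ[μ] X)
    (h : ∀ t : ℝ, 0 < t → HasNonposMean (fun ω ↦ Real.log ((t + X ω) / (t + 1))) μ) :
    ∫⁻ ω, ENNReal.ofReal (X ω) ∂μ ≤ μ univ := by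
  have hbound (t : ℝ) (ht : 0 < t) :
      ∫⁻ ω, ENNReal.ofReal (t * Real.log (1 + X ω / t)) ∂μ ≤ μ univ := by
    have hnonneg : 0 ≤ᵐ[μ] fun ω ↦ t * Real.log (1 + X ω / t) := hX_nonneg.mono fun ω hω ↦
      mul_nonneg ht.le (Real.log_nonneg (le_add_of_nonneg_right (div_nonneg hω ht.le)))
    rw [← hasNonposMean_sub_one_iff (by fun_prop) hnonneg]
    exact ((h t ht).const_mul ht.le).mono_ae
      (hX_nonneg.mono fun _ ↦ mul_log_one_add_div_sub_one_le ht)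
  exact lintegral_le_of_tendsto_of_eventually_le (u := atTop) (by fun_prop)
    (ae_of_all μ fun ω ↦
      ENNReal.tendsto_ofReal (Real.tendsto_mul_log_one_add_div_atTop (X ω)))
    ((eventually_gt_atTop 0).mono hbound)

theorem numeraire_iff_growth_optimal_general [IsFiniteMeasure μ] {C : Set (Ω → ℝ)} {V : Ω → ℝ}
    (hC : StarConvex ℝ V C) (hC_meas : ∀ W ∈ C, AEMeasurable W μ)
    (hC_pos : ∀ W ∈ C, ∀ᵐ ω ∂μ, 0 < W ω) :
    (∀ W ∈ C, ∫⁻ ω, ENNReal.ofReal (W ω / V ω) ∂μ ≤ μ univ) ↔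
      ∀ W ∈ C, HasNonposMean (fun ω ↦ Real.log (W ω / V ω)) μ := by
  obtain rfl | hC_nonempty := C.eq_empty_or_nonempty
  · simp only [mem_empty_iff_false, false_imp_iff, implies_true]
  have hV : V ∈ C := hC.mem hC_nonempty
  have hratio_meas (W) (hW : W ∈ C) : AEMeasurable (fun ω ↦ W ω / V ω) μ :=
    (hC_meas W hW).div (hC_meas V hV)
  have hratio_pos (W) (hW : W ∈ C) : ∀ᵐ ω ∂μ, 0 < W ω / V ω :=
    (hC_pos W hW).mp ((hC_pos V hV).mono fun _ hVω hWω ↦ div_pos hWω hVω)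
  refine ⟨fun h W hW ↦
    hasNonposMean_log_of_lintegral_le (hratio_meas W hW) (hratio_pos W hW) (h W hW), fun h W hW ↦
    lintegral_le_of_forall_hasNonposMean_log (hratio_meas W hW)
      ((hratio_pos W hW).mono fun _ ↦ le_of_lt) fun t ht ↦ ?_⟩
  have hmem : (t / (t + 1)) • V + (1 / (t + 1)) • W ∈ C :=
    hC hW (by positivity) (by positivity) (by field_simp)
  refine (h _ hmem).mono_ae ((hC_pos V hV).mono fun ω hVω ↦ le_of_eq ?_)
  simp only [Pi.add_apply, Pi.smul_apply, smul_eq_mul]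
  congr 1
  field_simp

end

/-- Let `C` be a convex set of a.s. strictly positive random variables
and `V* ∈ C`. Then the following are equivalent: (i) `E[W / V*] ≤ 1` for every `W ∈ C`
(`V*` is a numéraire portfolio for `C`); (ii) for every `W ∈ C`,
`E[(log(W/V*))⁺] ≤ E[(log(W/V*))⁻]`, i.e. `E[log(W/V*)] ≤ 0` in the extended sense
(`V*` is growth-optimal for `C`). -/
theorem numeraire_iff_growth_optimal
    {Ω : Type*} [MeasurableSpace Ω] (P : Measure Ω) [IsProbabilityMeasure P]
    (C : Set (Ω → ℝ)) (hC : Convex ℝ C)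
    (hCmeas : ∀ W ∈ C, Measurable W) (hCpos : ∀ W ∈ C, ∀ᵐ ω ∂P, 0 < W ω)
    (Vstar : Ω → ℝ) (hV : Vstar ∈ C) :
    (∀ W ∈ C, ∫⁻ ω, ENNReal.ofReal (W ω / Vstar ω) ∂P ≤ 1) ↔
      (∀ W ∈ C,
        ∫⁻ ω, ENNReal.ofReal (max (Real.log (W ω / Vstar ω)) 0) ∂P
          ≤ ∫⁻ ω, ENNReal.ofReal (max (-(Real.log (W ω / Vstar ω))) 0) ∂P) := by
  simpa only [HasNonposMean, ENNReal.ofReal_max, ENNReal.ofReal_zero, zero_le, max_eq_left,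
    measure_univ] using numeraire_iff_growth_optimal_general (hC.starConvex hV)
      (fun W hW ↦ (hCmeas W hW).aemeasurable) hCpos
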